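/- Let E be a real Banach space, let L : E → E be a continuous linear equivalence, and let X : ℝ → E → E be a time-dependent vector field such that X(t, L x) = L(X(t, x)) for all t and x, the map t ↦ X(t, y) is continuous for each y, and for each t the map y ↦ X(t, y) is Lipschitz with a constant K independent of t. If u, w : ℝ → E are integral curves of X (each has derivative X(t, ·) evaluated at its current position at every time t) with w(0) = L(u(0)), then w(t) = L(u(t)) for all t ∈ ℝ. -/

import Mathlib

/-- Let `E` be a real Banach space, `L` a continuous linear equivalence
of `E`, and `X : ℝ → E → E` a time-dependent vector field which is equivariant under `L`,
continuous in time, and Lipschitz in space with constant `K` independent of `t`.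
If `u` and `w` are integral curves of `X` with `w 0 = L (u 0)`, then `w t = L (u t)` for
all `t` (equivariance of the flow). -/
theorem equivariant_field_equivariant_flow
    {E : Type*} [NormedAddCommGroup E] [NormedSpace ℝ E] [CompleteSpace E]
    (L : E ≃L[ℝ] E) (X : ℝ → E → E) (K : NNReal)
    (hequiv : ∀ t : ℝ, ∀ x : E, X t (L x) = L (X t x))
    (hcont : ∀ y : E, Continuous fun t => X t y)
    (hlip : ∀ t : ℝ, LipschitzWith K (X t))
    (u w : ℝ → E)
    (hu : ∀ t : ℝ, HasDerivAt u (X t (u t)) t)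
    (hw : ∀ t : ℝ, HasDerivAt w (X t (w t)) t)
    (h0 : w 0 = L (u 0)) :
    ∀ t : ℝ, w t = L (u t) := by
  have hLu (t : ℝ) : HasDerivAt (fun s => L (u s)) (X t (L (u t))) t := by
    rw [hequiv]
    exact (L : E →L[ℝ] E).hasFDerivAt.comp_hasDerivAt t (hu t)
  have hlipOn (t : ℝ) : LipschitzOnWith K (X t) Set.univ := (hlip t).lipschitzOnWith
  exact congrFun (ODE_solution_unique_univ hlipOn
    (fun t => ⟨hw t, Set.mem_univ _⟩) (fun t => ⟨hLu t, Set.mem_univ _⟩) h0)
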